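/- arXiv:2405.11428 — 2 statements merged into one kernel-verified Lean document; each statement's English description precedes it below -/
import Mathlib

section
/- Let α ≥ 12 be an even integer, let s_α > 0 be a minimizer of t ↦ Σ_{n∈ℤ} t·f_α(t n) over t > 0, and set F_α(x) = 1/(1 + s_α^α x^α). Then (1/2)·(1 − 2·Σ_{n=1}^∞ F_α(n)) − (1/π)·Σ_{n=2}^∞ |F_α′(n)| ≥ 0, where F_α′ denotes the derivative of F_α. -/
/-- The lattice energy `t ↦ Σ_{n∈ℤ} t·f_α(t n)` with `f_α(x) = 1/(1+x^α)`. -/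
noncomputable def latticeEnergy (α : ℕ) (t : ℝ) : ℝ :=
  ∑' n : ℤ, t * (1 / (1 + (t * (n : ℝ)) ^ α))

/-!
Write `S` for `∑_{n ≥ 1} F(n)`, where `F(x) = 1 / (1 + u x ^ α)` and `u = s ^ α`. Since
`|F'(x)| ≤ 1 / (u x ^ 2)` for `x ≥ 2`, the derivatives contribute at most `1 / (π u)`. If `S ≤ 1/3`,
then the first term `1 / (1 + u)` of `S` forces `u ≥ 2`, and `S + 1 / (π u) ≤ 1/3 + 1/6 = 1/2`.

The energy at `s` equals `s (1 + 2 S)`, and it is below `71/48` because the energy at `4/3` is.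
Hence `S ≤ 1/3` as soon as `s > 1`, and it remains to exclude `s ≤ 1`. Take `N` with
`a := s N ≤ 1 < s (N + 1) =: b`. On `[0, 1]` we have `1 / (1 + x ^ α) ≥ 1 - x ^ 5 / 2`, so the terms
with `|n| ≤ N` give at least `a + b - (a b) ^ 3 / 6`. Here `(1 - a) (b - 1) ≥ 0` gives
`a + b ≥ 1 + p` with `p = a b ∈ [1/2, 2]`, and the concave function `1 + p - p ^ 3 / 6` is smallest
at `p = 1/2`, where it equals `71/48`.
-/

open Finset Real

section InverseSquares

lemma hasSum_one_div_nat_add_two_sq :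
    HasSum (fun n : ℕ ↦ 1 / ((n : ℝ) + 2) ^ 2) (π ^ 2 / 6 - 1) := by
  simpa [sum_range_succ] using (hasSum_nat_add_iff' 2).2 hasSum_zeta_two

variable {a : ℕ → ℝ} {c : ℝ}

lemma summable_of_le_div_nat_add_two_sq (ha : ∀ n, 0 ≤ a n)
    (hac : ∀ n : ℕ, a n ≤ c / ((n : ℝ) + 2) ^ 2) : Summable a := by
  refine .of_nonneg_of_le ha hac ?_
  simpa only [mul_one_div] using hasSum_one_div_nat_add_two_sq.summable.mul_left c

lemma tsum_le_of_le_div_nat_add_two_sq (ha : ∀ n, 0 ≤ a n)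
    (hac : ∀ n : ℕ, a n ≤ c / ((n : ℝ) + 2) ^ 2) : ∑' n, a n ≤ c := by
  have hc : 0 ≤ c := by simpa using div_nonneg_iff.1 ((ha 0).trans (hac 0))
  have hbound : HasSum (fun n : ℕ ↦ c / ((n : ℝ) + 2) ^ 2) (c * (π ^ 2 / 6 - 1)) := by
    simpa only [mul_one_div] using hasSum_one_div_nat_add_two_sq.mul_left c
  calc ∑' n, a n ≤ c * (π ^ 2 / 6 - 1) :=
        hasSum_le hac (summable_of_le_div_nat_add_two_sq ha hac).hasSum hbound
    _ ≤ c := mul_le_of_le_one_right hc (by nlinarith [pi_pos, pi_lt_d2])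

end InverseSquares

section PowerBounds

variable {x : ℝ} {α : ℕ}

lemma two_pow_mul_sq_le_pow (hx : 2 ≤ x) (hα : 2 ≤ α) : 2 ^ (α - 2) * x ^ 2 ≤ x ^ α := by
  calc 2 ^ (α - 2) * x ^ 2 ≤ x ^ (α - 2) * x ^ 2 := by gcongr
    _ = x ^ α := pow_sub_mul_pow x hα

lemma natCast_mul_le_pow (hx : 2 ≤ x) (k : ℕ) : k * x ≤ x ^ k := by
  cases k with
  | zero => simp
  | succ k =>
    have bernoulli : 1 + k * (x - 1) ≤ x ^ k := one_add_mul_sub_le_pow (by linarith) k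
    have hk : (k : ℝ) ≤ k * (x - 1) := le_mul_of_one_le_right k.cast_nonneg (by linarith)
    rw [pow_succ]
    push_cast
    gcongr
    linarith

lemma one_sub_pow_div_two_le_one_div (hx0 : 0 ≤ x) (hx1 : x ≤ 1) {k : ℕ} (hk : 2 * k ≤ α) :
    1 - x ^ k / 2 ≤ 1 / (1 + x ^ α) := by
  have hpow : x ^ α ≤ (x ^ k) ^ 2 := by
    rw [← pow_mul, mul_comm]
    exact pow_le_pow_of_le_one hx0 hx1 hk
  have hz : 0 ≤ x ^ k := pow_nonneg hx0 k
  calc 1 - x ^ k / 2 ≤ 1 / (1 + (x ^ k) ^ 2) := by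
        rw [le_div_iff₀ (by positivity)]
        nlinarith [mul_nonneg hz (sq_nonneg (x ^ k - 1))]
    _ ≤ 1 / (1 + x ^ α) := by gcongr

lemma sum_range_succ_pow_five_le (N : ℕ) :
    ∑ i ∈ range N, ((i : ℝ) + 1) ^ 5 ≤ ((N : ℝ) * (N + 1)) ^ 3 / 6 := by
  induction N with
  | zero => simp
  | succ N ih =>
    rw [sum_range_succ]
    push_cast
    have hcube : 0 ≤ ((N : ℝ) + 1) ^ 3 := by positivity
    linear_combination ih + hcube / 3

end PowerBounds

/-- The function `x ↦ 1 / (1 + u x ^ α)`. The paper's `F_α` is the case `u = s_α ^ α`, and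
`f_α(t x)` is the case `u = t ^ α`, which puts both series of the theorem on the integers. -/
noncomputable def profile (α : ℕ) (u x : ℝ) : ℝ :=
  1 / (1 + u * x ^ α)

section Profile

variable {α : ℕ} {u x : ℝ}

lemma profile_nonneg (hu : 0 ≤ u) (hx : 0 ≤ x) : 0 ≤ profile α u x := by
  unfold profile
  positivity

lemma profile_le_div_sq (hα : 2 ≤ α) (hu : 0 < u) (hx : 2 ≤ x) :
    profile α u x ≤ 1 / (2 ^ (α - 2) * u) / x ^ 2 := by
  rw [profile, div_div]
  gcongr
  calc 2 ^ (α - 2) * u * x ^ 2 = u * (2 ^ (α - 2) * x ^ 2) := by ring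
    _ ≤ u * x ^ α := by gcongr; exact two_pow_mul_sq_le_pow hx hα
    _ ≤ 1 + u * x ^ α := by linarith

lemma summable_profile_add_two (hα : 2 ≤ α) (hu : 0 < u) :
    Summable fun n : ℕ ↦ profile α u (n + 2) :=
  summable_of_le_div_nat_add_two_sq (fun n ↦ profile_nonneg hu.le (by positivity))
    fun n ↦ profile_le_div_sq hα hu (by simp)

lemma tsum_profile_add_two_le (hα : 2 ≤ α) (hu : 0 < u) :
    ∑' n : ℕ, profile α u (n + 2) ≤ 1 / (2 ^ (α - 2) * u) :=
  tsum_le_of_le_div_nat_add_two_sq (fun n ↦ profile_nonneg hu.le (by positivity))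
    fun n ↦ profile_le_div_sq hα hu (by simp)

lemma profile_natCast_succ_add_one (n : ℕ) :
    profile α u ((n + 1 : ℕ) + 1) = profile α u (n + 2) := by
  push_cast
  ring_nf

lemma summable_profile_add_one (hα : 2 ≤ α) (hu : 0 < u) :
    Summable fun n : ℕ ↦ profile α u (n + 1) := by
  rw [← summable_nat_add_iff 1]
  simpa only [profile_natCast_succ_add_one] using summable_profile_add_two hα hu

lemma tsum_profile_add_one (hα : 2 ≤ α) (hu : 0 < u) :
    ∑' n : ℕ, profile α u (n + 1) = 1 / (1 + u) + ∑' n : ℕ, profile α u (n + 2) := by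
  rw [(summable_profile_add_one hα hu).tsum_eq_zero_add]
  simp only [profile_natCast_succ_add_one]
  simp [profile]

lemma deriv_profile (hx : 1 + u * x ^ α ≠ 0) :
    deriv (profile α u) x = -(u * (α * x ^ (α - 1))) / (1 + u * x ^ α) ^ 2 := by
  have hden : HasDerivAt (fun y ↦ 1 + u * y ^ α) (u * (α * x ^ (α - 1))) x :=
    ((hasDerivAt_pow α x).const_mul u).const_add 1
  have hprofile : profile α u = fun y ↦ (1 + u * y ^ α)⁻¹ := by
    ext y
    exact one_div _
  rw [hprofile]
  exact (hden.fun_inv hx).deriv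

lemma abs_deriv_profile_le (hu : 0 < u) (hx : 2 ≤ x) :
    |deriv (profile α u) x| ≤ 1 / u / x ^ 2 := by
  have : 0 < x := by linarith
  have hpow : α * x ^ (α - 1) * x = α * x ^ α := by
    cases α with
    | zero => simp
    | succ k => simp [pow_succ, mul_assoc]
  rw [deriv_profile (by positivity), abs_div, abs_neg, abs_of_nonneg (by positivity),
    abs_of_nonneg (by positivity), div_div, div_le_div_iff₀ (by positivity) (by positivity)]
  calc u * (α * x ^ (α - 1)) * (u * x ^ 2) = u ^ 2 * (α * x ^ (α - 1) * x) * x := by ring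
    _ = u ^ 2 * x ^ α * (α * x) := by rw [hpow]; ring
    _ ≤ u ^ 2 * x ^ α * x ^ α := by gcongr; exact natCast_mul_le_pow hx α
    _ = (u * x ^ α) ^ 2 := by ring
    _ ≤ 1 * (1 + u * x ^ α) ^ 2 := by rw [one_mul]; gcongr; linarith

lemma tsum_abs_deriv_profile_add_two_le (hu : 0 < u) :
    ∑' n : ℕ, |deriv (profile α u) (n + 2)| ≤ 1 / u :=
  tsum_le_of_le_div_nat_add_two_sq (fun _ ↦ abs_nonneg _)
    fun n ↦ abs_deriv_profile_le hu (by simp)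

lemma two_le_of_tsum_profile_add_one_le (hα : 2 ≤ α) (hu : 0 < u)
    (hsum : ∑' n : ℕ, profile α u (n + 1) ≤ 1 / 3) : 2 ≤ u := by
  have htail : 0 ≤ ∑' n : ℕ, profile α u (n + 2) :=
    tsum_nonneg fun n ↦ profile_nonneg hu.le (by positivity)
  have hfirst : 1 / (1 + u) ≤ 1 / 3 := by linarith [tsum_profile_add_one hα hu]
  linarith [(one_div_le_one_div (by positivity) (by norm_num)).1 hfirst]

lemma half_sub_tsum_profile_sub_tsum_abs_deriv_nonneg (hα : 2 ≤ α) (hu : 0 < u)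
    (hsum : ∑' n : ℕ, profile α u (n + 1) ≤ 1 / 3) :
    0 ≤ (1 / 2) * (1 - 2 * ∑' n : ℕ, profile α u (n + 1))
        - (1 / π) * ∑' n : ℕ, |deriv (profile α u) (n + 2)| := by
  have hu2 : 2 ≤ u := two_le_of_tsum_profile_add_one_le hα hu hsum
  have hderiv : (1 / π) * ∑' n : ℕ, |deriv (profile α u) (n + 2)| ≤ 1 / 6 := by
    calc (1 / π) * ∑' n : ℕ, |deriv (profile α u) (n + 2)| ≤ (1 / 3) * (1 / 2) := by
          gcongr
          · exact pi_gt_three.le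
          · exact (tsum_abs_deriv_profile_add_two_le hu).trans (by gcongr)
      _ = 1 / 6 := by norm_num
  linarith

end Profile

section LatticeEnergy

variable {α : ℕ} {t : ℝ}

lemma latticeEnergy_eq (hα : Even α) (hα2 : 2 ≤ α) (ht : t ≠ 0) :
    latticeEnergy α t = t * (1 + 2 * ∑' n : ℕ, profile α (t ^ α) (n + 1)) := by
  have hsummable : Summable fun n : ℕ ↦ t * profile α (t ^ α) (n + 1) :=
    (summable_profile_add_one hα2 (hα.pow_pos ht)).mul_left t
  have hpos (n : ℕ) : t * (1 / (1 + (t * ((n + 1 : ℤ) : ℝ)) ^ α)) =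
      t * profile α (t ^ α) (n + 1) := by
    simp [profile, mul_pow]
  have hneg (n : ℕ) : t * (1 / (1 + (t * ((-(n + 1) : ℤ) : ℝ)) ^ α)) =
      t * profile α (t ^ α) (n + 1) := by
    rw [← hpos, Int.cast_neg, mul_neg, hα.neg_pow]
  rw [latticeEnergy, tsum_of_add_one_of_neg_add_one (by simpa only [hpos])
    (by simpa only [hneg])]
  simp only [hpos, hneg, tsum_mul_left, Int.cast_zero, mul_zero,
    zero_pow (by lia : α ≠ 0)]
  ring

lemma latticeEnergy_four_thirds_lt (hα : Even α) (hα10 : 10 ≤ α) :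
    latticeEnergy α (4 / 3) < 71 / 48 := by
  have hu : (17.7 : ℝ) ≤ (4 / 3) ^ α :=
    le_trans (by norm_num) (pow_le_pow_right₀ (by norm_num) hα10)
  have htail : ∑' n : ℕ, profile α ((4 / 3) ^ α) (n + 2) ≤ 1 / (2 ^ 8 * 17.7) := by
    refine (tsum_profile_add_two_le (by lia) (by positivity)).trans ?_
    gcongr
    · norm_num
    · lia
  have hfirst : 1 / (1 + (4 / 3 : ℝ) ^ α) ≤ 1 / (1 + 17.7) := by gcongr
  rw [latticeEnergy_eq hα (by lia) (by norm_num), tsum_profile_add_one (by lia) (by positivity)]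
  norm_num at htail hfirst ⊢
  linarith

lemma le_latticeEnergy_of_mul_le_one (hα : Even α) (hα10 : 10 ≤ α) (ht : 0 < t) {N : ℕ}
    (hN : t * N ≤ 1) :
    t * N + t * (N + 1) - (t * N * (t * (N + 1))) ^ 3 / 6 ≤ latticeEnergy α t := by
  have hterm : ∀ i ∈ range N, 1 - t ^ 5 / 2 * ((i : ℝ) + 1) ^ 5 ≤ profile α (t ^ α) (i + 1) := by
    intro i hi
    have hiN : (i : ℝ) + 1 ≤ N := by exact_mod_cast mem_range.1 hi
    have hle : t * ((i : ℝ) + 1) ≤ 1 := le_trans (by gcongr) hN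
    have := one_sub_pow_div_two_le_one_div (by positivity) hle (show 2 * 5 ≤ α from hα10)
    rw [profile, ← mul_pow]
    linarith [mul_pow t ((i : ℝ) + 1) 5]
  have hsum : N - t ^ 5 / 2 * (((N : ℝ) * (N + 1)) ^ 3 / 6) ≤
      ∑' n : ℕ, profile α (t ^ α) (n + 1) := by
    calc N - t ^ 5 / 2 * (((N : ℝ) * (N + 1)) ^ 3 / 6)
        ≤ N - t ^ 5 / 2 * ∑ i ∈ range N, ((i : ℝ) + 1) ^ 5 := by
          gcongr
          exact sum_range_succ_pow_five_le N
      _ = ∑ i ∈ range N, (1 - t ^ 5 / 2 * ((i : ℝ) + 1) ^ 5) := by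
          simp [sum_sub_distrib, mul_sum]
      _ ≤ ∑ i ∈ range N, profile α (t ^ α) (i + 1) := sum_le_sum hterm
      _ ≤ ∑' n : ℕ, profile α (t ^ α) (n + 1) :=
          (summable_profile_add_one (by lia) (by positivity)).sum_le_tsum _
            fun n _ ↦ profile_nonneg (by positivity) (by positivity)
  rw [latticeEnergy_eq hα (by lia) ht.ne']
  linear_combination 2 * t * hsum

lemma le_add_sub_mul_pow_three {a b : ℝ} (ha : a ≤ 1) (hb : 1 ≤ b) (hba : b ≤ 2 * a) :
    71 / 48 ≤ a + b - (a * b) ^ 3 / 6 := by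
  have hsum : 1 + a * b ≤ a + b := by nlinarith
  have hlower : 1 / 2 ≤ a * b := by nlinarith
  have hupper : a * b ≤ 2 := by nlinarith
  -- `1 + p - p ^ 3 / 6 - 71 / 48 = (p - 1/2) (23/4 - p/2 - p ^ 2) / 6`
  have hroot : 0 ≤ (a * b - 1 / 2) * (23 / 4 - a * b / 2 - (a * b) ^ 2) :=
    mul_nonneg (by linarith) (by nlinarith [hupper])
  linear_combination hsum + hroot / 6

lemma le_latticeEnergy_of_le_one (hα : Even α) (hα10 : 10 ≤ α) (ht : 0 < t) (ht1 : t ≤ 1) :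
    71 / 48 ≤ latticeEnergy α t := by
  set N := ⌊1 / t⌋₊
  have hN : 1 ≤ (N : ℝ) := by
    exact_mod_cast Nat.one_le_floor_iff _ |>.2 (one_le_one_div ht ht1)
  have hle : t * N ≤ 1 := by
    rw [mul_comm, ← le_div_iff₀ ht]
    exact Nat.floor_le (by positivity)
  have hlt : 1 < t * (N + 1) := by
    rw [mul_comm, ← div_lt_iff₀ ht]
    exact Nat.lt_floor_add_one _
  exact (le_add_sub_mul_pow_three hle hlt.le (by nlinarith)).trans
    (le_latticeEnergy_of_mul_le_one hα hα10 ht hle)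

end LatticeEnergy

theorem statement17_general (α : ℕ) (hα : Even α) (hα10 : 10 ≤ α) (s : ℝ) (hs : 0 < s)
    (hle : latticeEnergy α s ≤ latticeEnergy α (4 / 3))
    (F : ℝ → ℝ) (hF : ∀ x, F x = 1 / (1 + s ^ α * x ^ α)) :
    0 ≤ (1 / 2) * (1 - 2 * ∑' n : ℕ, F ((n : ℝ) + 1))
        - (1 / π) * ∑' n : ℕ, |deriv F ((n : ℝ) + 2)| := by
  obtain rfl : F = profile α (s ^ α) := funext hF
  have hE : latticeEnergy α s < 71 / 48 := hle.trans_lt (latticeEnergy_four_thirds_lt hα hα10)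
  have hs1 : 1 < s := by
    by_contra! hs1
    exact hE.not_ge (le_latticeEnergy_of_le_one hα hα10 hs hs1)
  apply half_sub_tsum_profile_sub_tsum_abs_deriv_nonneg (by lia) (by positivity)
  rw [latticeEnergy_eq hα (by lia) hs.ne'] at hE
  nlinarith

/-- For `α ≥ 12`, `(1/2)·(1 − 2Σ_{n=1}^∞ F_α(n)) − (1/π)·Σ_{n=2}^∞ |F_α′(n)| ≥ 0`. -/
theorem statement17 (α : ℕ) (hα : Even α) (hα12 : 12 ≤ α) (s : ℝ) (hs : 0 < s)
    (hmin : ∀ t : ℝ, 0 < t → latticeEnergy α s ≤ latticeEnergy α t)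
    (F : ℝ → ℝ) (hF : ∀ x, F x = 1 / (1 + s ^ α * x ^ α)) :
    0 ≤ (1 / 2) * (1 - 2 * ∑' n : ℕ, F ((n : ℝ) + 1))
        - (1 / Real.pi) * ∑' n : ℕ, |deriv F ((n : ℝ) + 2)| :=
  statement17_general α hα (by lia) s hs (hmin _ (by norm_num)) F hF
end

section
/- Let α ≥ 12 be an even integer, let s_α > 0 be a minimizer of t ↦ Σ_{n∈ℤ} t·f_α(t n) over t > 0, and set F_α(x) = 1/(1 + s_α^α x^α). Define ℛ : ℝ → ℝ by ℛ(x) = (sin x − x + x³/6)/x³ for x ≠ 0 and ℛ(0) = 0. Then Σ_{n∈ℤ} n³·F_α′(n)·(−2/3 + 4ℛ(πn)) − Σ_{n∈ℤ} 2n²·F_α(n) ≥ 0, where F_α′ denotes the derivative of F_α. -/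
/-- `ℛ(x) = (sin x − x + x³/6)/x³` for `x ≠ 0`, `ℛ(0) = 0`. -/
noncomputable def Rfun (x : ℝ) : ℝ :=
  if x = 0 then 0 else (Real.sin x - x + x ^ 3 / 6) / x ^ 3

/-!
Since `sin (π n) = 0`, the first series is `(4α/π²) Σ y_n / (1 + y_n)²` and the second is
`Σ 2n² / (1 + y_n)`, where `y_n = c n^α` and `c = s^α`. Suppose `c ≥ 1`. The terms `n = ±1` of the
first series contribute at least `(4α/π²) / (1 + c)`. In the second, the factorization
`1 + c X² - (1 + c) X = (X - 1)(c X - 1)` at `X = |n|^(α/2) ≥ n⁶` bounds the term of index `n ≠ 0`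
by `2 / ((1 + c) n⁴)`, so that the series is at most `(2 / (1 + c)) · 2ζ(4)`, and the inequality
reduces to `π⁶ ≤ 90α`.

A minimizer satisfies `s ≥ 1`, because the energy at `5/4` is already smaller than anywhere on
`(0, 1)`: there the energy is bounded below by the terms `n = 0, ±1` when `t ≥ 1/2`, and by
comparison with `2 ∫₀^∞ f_α - t ≥ 2 - t` when `t < 1/2`. The integral is at least `1` because
`x (1 + x^α)^(-1/α)` tends to `1` and has derivative at most `f_α`.
-/

open Filter Real Topology

section Series

theorem two_mul_sum_range_le_tsum_int_add {f : ℤ → ℝ} (hf_even : Function.Even f)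
    (hf_nonneg : 0 ≤ f) (hf : Summable f) (N : ℕ) :
    2 * ∑ i ∈ Finset.range N, f i ≤ ∑' n, f n + f 0 := by
  have h := sum_le_hasSum (Finset.range N)
    (fun i _ => add_nonneg (hf_nonneg i) (hf_nonneg (-i))) hf.hasSum.nat_add_neg
  simpa only [hf_even _, ← two_mul, ← Finset.mul_sum] using h

theorem hasSum_int_one_div_pow_four :
    HasSum (fun n : ℤ => 1 / (n : ℝ) ^ 4) (π ^ 4 / 45) := by
  have h_neg : HasSum (fun n : ℕ => 1 / ((-n : ℤ) : ℝ) ^ 4) (π ^ 4 / 90) := by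
    simpa [Even.neg_pow (by decide : Even 4)] using hasSum_zeta_four
  have h := HasSum.of_nat_of_neg (f := fun n : ℤ => 1 / (n : ℝ) ^ 4)
    (by simpa using hasSum_zeta_four) h_neg
  have h_total : π ^ 4 / 90 + π ^ 4 / 90 - 1 / ((0 : ℤ) : ℝ) ^ 4 = π ^ 4 / 45 := by
    norm_num
    ring
  rwa [h_total] at h

theorem integral_le_mul_sum_of_antitoneOn {g : ℝ → ℝ} {t : ℝ} (ht : 0 < t) (N : ℕ)
    (hg : AntitoneOn g (Set.Icc 0 (t * N))) :
    ∫ x in (0 : ℝ)..t * N, g x ≤ t * ∑ i ∈ Finset.range N, g (t * i) := by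
  have h_anti : AntitoneOn (fun x => g (t * x)) (Set.Icc 0 (0 + N)) := by
    rw [zero_add]
    have h_maps : Set.MapsTo (t * ·) (Set.Icc 0 (N : ℝ)) (Set.Icc 0 (t * N)) :=
      fun x hx => ⟨mul_nonneg ht.le hx.1, mul_le_mul_of_nonneg_left hx.2 ht.le⟩
    exact fun x hx y hy hxy =>
      hg (h_maps hx) (h_maps hy) (mul_le_mul_of_nonneg_left hxy ht.le)
  have h := h_anti.integral_le_sum
  rw [intervalIntegral.integral_comp_mul_left g ht.ne'] at h
  simpa only [zero_add, mul_zero, smul_eq_mul, inv_mul_le_iff₀ ht] using h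

end Series

section Kernel

variable {α : ℕ} {c : ℝ}

theorem one_add_mul_pow_pos (hα : Even α) (hc : 0 ≤ c) (x : ℝ) : 0 < 1 + c * x ^ α :=
  add_pos_of_pos_of_nonneg one_pos (mul_nonneg hc (hα.pow_nonneg x))

theorem intCast_pow_le_pow_of_even {m : ℕ} (hm : Even m) (hα : Even α) (hmα : m ≤ α) {n : ℤ}
    (hn : n ≠ 0) : (n : ℝ) ^ m ≤ (n : ℝ) ^ α := by
  have h_abs : (1 : ℝ) ≤ |(n : ℝ)| := by exact_mod_cast Int.one_le_abs hn
  rw [← hm.pow_abs, ← hα.pow_abs]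
  exact pow_le_pow_right₀ h_abs hmα

theorem one_div_one_add_mul_pow_le {m : ℕ} (hm : Even m) (hα : Even α) (hmα : m ≤ α) (hc : 0 < c)
    (n : ℤ) :
    1 / (1 + c * (n : ℝ) ^ α) ≤ (if n = 0 then 1 else 0) + c⁻¹ * (1 / (n : ℝ) ^ m) := by
  rcases eq_or_ne n 0 with rfl | hn
  · rw [if_pos rfl]
    have h_le_one : 1 / (1 + c * ((0 : ℤ) : ℝ) ^ α) ≤ 1 :=
      div_le_one_of_le₀ (le_add_of_nonneg_right (mul_nonneg hc.le (hα.pow_nonneg _)))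
        (one_add_mul_pow_pos hα hc.le _).le
    exact le_add_of_le_of_nonneg h_le_one
      (mul_nonneg (inv_pos.2 hc).le (one_div_nonneg.2 (hm.pow_nonneg _)))
  · have h_pow : (n : ℝ) ^ m ≤ (n : ℝ) ^ α := intCast_pow_le_pow_of_even hm hα hmα hn
    have h_pos : 0 < (n : ℝ) ^ m := hm.pow_pos (by exact_mod_cast hn)
    calc 1 / (1 + c * (n : ℝ) ^ α) ≤ 1 / (c * (n : ℝ) ^ m) :=
          one_div_le_one_div_of_le (mul_pos hc h_pos) (by nlinarith)
      _ = (if n = 0 then 1 else 0) + c⁻¹ * (1 / (n : ℝ) ^ m) := by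
          simp only [if_neg hn, zero_add, one_div, mul_inv]

theorem summable_one_div_one_add_mul_pow (hα : Even α) (hα2 : 2 ≤ α) (hc : 0 < c) :
    Summable fun n : ℤ => 1 / (1 + c * (n : ℝ) ^ α) :=
  .of_nonneg_of_le (fun n => (one_div_pos.2 (one_add_mul_pow_pos hα hc.le n)).le)
    (one_div_one_add_mul_pow_le even_two hα hα2 hc)
    ((hasSum_ite_eq 0 1).summable.add
      ((summable_one_div_int_pow.2 one_lt_two).mul_left c⁻¹))

theorem tsum_one_div_one_add_mul_pow_le (hα : Even α) (hα4 : 4 ≤ α) (hc : 0 < c) :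
    ∑' n : ℤ, 1 / (1 + c * (n : ℝ) ^ α) ≤ 1 + c⁻¹ * (π ^ 4 / 45) :=
  hasSum_le (one_div_one_add_mul_pow_le (by decide) hα hα4 hc)
    (summable_one_div_one_add_mul_pow hα (by lia) hc).hasSum
    ((hasSum_ite_eq 0 1).add (hasSum_int_one_div_pow_four.mul_left c⁻¹))

theorem antitoneOn_one_div_one_add_pow (α : ℕ) :
    AntitoneOn (fun x : ℝ => 1 / (1 + x ^ α)) (Set.Ici 0) := by
  intro x (hx : 0 ≤ x) y _ hxy
  dsimp only
  gcongr

theorem hasDerivAt_mul_one_add_pow_rpow (hα : α ≠ 0) {x : ℝ} (hx : 0 < 1 + x ^ α) :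
    HasDerivAt (fun x : ℝ => x * (1 + x ^ α) ^ (-(α : ℝ)⁻¹))
      ((1 + x ^ α) ^ (-(α : ℝ)⁻¹ - 1)) x := by
  have h_rpow := ((hasDerivAt_pow α x).const_add 1).rpow_const (p := -(α : ℝ)⁻¹) (Or.inl hx.ne')
  refine ((hasDerivAt_id' x).fun_mul h_rpow).congr_deriv ?_
  have h_split : (1 + x ^ α) ^ (-(α : ℝ)⁻¹) = (1 + x ^ α) ^ (-(α : ℝ)⁻¹ - 1) * (1 + x ^ α) := by
    rw [← rpow_add_one hx.ne', sub_add_cancel]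
  have hα' : (α : ℝ) ≠ 0 := by exact_mod_cast hα
  rw [h_split, ← pow_sub_one_mul hα x]
  field_simp
  ring

theorem mul_one_add_pow_rpow_le_integral (hα : α ≠ 0) {b : ℝ} (hb : 0 ≤ b) :
    b * (1 + b ^ α) ^ (-(α : ℝ)⁻¹) ≤ ∫ x in (0 : ℝ)..b, 1 / (1 + x ^ α) := by
  have h_deriv {x : ℝ} (hx : 0 ≤ x) := hasDerivAt_mul_one_add_pow_rpow hα
    (add_pos_of_pos_of_nonneg one_pos (pow_nonneg hx α))
  have h_deriv_le {x : ℝ} (hx : 0 ≤ x) :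
      (1 + x ^ α) ^ (-(α : ℝ)⁻¹ - 1) ≤ 1 / (1 + x ^ α) := by
    have h_exp : -(α : ℝ)⁻¹ - 1 ≤ -1 := by simp
    rw [one_div, ← rpow_neg_one (1 + x ^ α)]
    exact rpow_le_rpow_of_exponent_le (le_add_of_nonneg_right (pow_nonneg hx α)) h_exp
  simpa using intervalIntegral.sub_le_integral_of_hasDeriv_right_of_le hb
    (fun x hx => (h_deriv hx.1).continuousAt.continuousWithinAt)
    (fun x hx => (h_deriv hx.1.le).hasDerivWithinAt)
    (((antitoneOn_one_div_one_add_pow α).mono Set.Icc_subset_Ici_self).integrableOn_isCompact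
      isCompact_Icc)
    (fun x hx => h_deriv_le hx.1.le)

theorem tendsto_mul_one_add_pow_rpow (hα : α ≠ 0) :
    Tendsto (fun x : ℝ => x * (1 + x ^ α) ^ (-(α : ℝ)⁻¹)) atTop (𝓝 1) := by
  have h_inv : Tendsto (fun x : ℝ => (x ^ α)⁻¹ + 1) atTop (𝓝 1) := by
    simpa using (tendsto_inv_atTop_zero.comp (tendsto_pow_atTop hα)).add_const (1 : ℝ)
  have h_rpow := h_inv.rpow_const (p := -(α : ℝ)⁻¹) (Or.inl one_ne_zero)
  rw [one_rpow] at h_rpow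
  refine h_rpow.congr' ?_
  filter_upwards [eventually_gt_atTop 0] with x hx
  calc ((x ^ α)⁻¹ + 1) ^ (-(α : ℝ)⁻¹) = ((x ^ α)⁻¹ * (1 + x ^ α)) ^ (-(α : ℝ)⁻¹) := by
        congr 1
        field_simp
    _ = x * (1 + x ^ α) ^ (-(α : ℝ)⁻¹) := by
        rw [mul_rpow (by positivity) (by positivity), ← rpow_neg_eq_inv_rpow, neg_neg,
          pow_rpow_inv_natCast hx.le hα]

end Kernel

section Energy

variable {α : ℕ} {t : ℝ}

theorem latticeEnergy_eq_mul_tsum (α : ℕ) (t : ℝ) :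
    latticeEnergy α t = t * ∑' n : ℤ, 1 / (1 + t ^ α * (n : ℝ) ^ α) := by
  simp only [latticeEnergy, mul_pow, tsum_mul_left]

theorem latticeEnergy_le (hα : Even α) (hα4 : 4 ≤ α) (ht : 0 < t) :
    latticeEnergy α t ≤ t * (1 + (t ^ α)⁻¹ * (π ^ 4 / 45)) := by
  rw [latticeEnergy_eq_mul_tsum]
  gcongr
  exact tsum_one_div_one_add_mul_pow_le hα hα4 (pow_pos ht α)

theorem two_mul_sum_range_le_latticeEnergy_add (hα : Even α) (hα2 : 2 ≤ α) (ht : 0 < t) (N : ℕ) :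
    2 * (t * ∑ i ∈ Finset.range N, 1 / (1 + (t * i) ^ α)) ≤ latticeEnergy α t + t := by
  have h := two_mul_sum_range_le_tsum_int_add (f := fun n : ℤ => 1 / (1 + t ^ α * (n : ℝ) ^ α))
    (fun n => by simp only [Int.cast_neg, hα.neg_pow])
    (fun n => (one_div_pos.2 (one_add_mul_pow_pos hα (pow_pos ht α).le n)).le)
    (summable_one_div_one_add_mul_pow hα hα2 (pow_pos ht α)) N
  simp only [Int.cast_natCast, Int.cast_zero, zero_pow (show α ≠ 0 by lia), mul_zero, add_zero,
    div_one] at h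
  simp only [latticeEnergy_eq_mul_tsum, mul_pow]
  linarith [mul_le_mul_of_nonneg_left h ht.le]

theorem mul_one_add_le_latticeEnergy (hα : Even α) (hα2 : 2 ≤ α) (ht : 0 < t) :
    t * (1 + 2 * (1 / (1 + t ^ α))) ≤ latticeEnergy α t := by
  have h := two_mul_sum_range_le_latticeEnergy_add hα hα2 ht 2
  simp only [Finset.sum_range_succ, Finset.sum_range_zero, Nat.cast_zero, Nat.cast_one, mul_zero,
    mul_one, zero_pow (show α ≠ 0 by lia), add_zero, zero_add, div_one] at h
  linarith

theorem two_sub_le_latticeEnergy (hα : Even α) (hα2 : 2 ≤ α) (ht : 0 < t) :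
    2 - t ≤ latticeEnergy α t := by
  have hα0 : α ≠ 0 := by lia
  have h_partial (N : ℕ) :
      t * N * (1 + (t * N) ^ α) ^ (-(α : ℝ)⁻¹) ≤ (latticeEnergy α t + t) / 2 := by
    have h_integral := mul_one_add_pow_rpow_le_integral hα0 (b := t * N) (by positivity)
    have h_sum := integral_le_mul_sum_of_antitoneOn ht N
      ((antitoneOn_one_div_one_add_pow α).mono Set.Icc_subset_Ici_self)
    linarith [two_mul_sum_range_le_latticeEnergy_add hα hα2 ht N]
  have h_lim := (tendsto_mul_one_add_pow_rpow hα0).comp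
    (tendsto_natCast_atTop_atTop.const_mul_atTop ht)
  linarith [le_of_tendsto' h_lim h_partial]

theorem latticeEnergy_five_quarters_lt (hα : Even α) (hα12 : 12 ≤ α) :
    latticeEnergy α (5 / 4) < 29 / 20 := by
  have h_pow : ((5 / 4 : ℝ) ^ α)⁻¹ ≤ ((5 / 4 : ℝ) ^ 12)⁻¹ := by gcongr; norm_num
  have h_pi : π ^ 4 ≤ 3.15 ^ 4 := by gcongr; exact pi_lt_d2.le
  calc latticeEnergy α (5 / 4) ≤ 5 / 4 * (1 + ((5 / 4) ^ α)⁻¹ * (π ^ 4 / 45)) :=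
        latticeEnergy_le hα (by lia) (by norm_num)
    _ ≤ 5 / 4 * (1 + ((5 / 4) ^ 12)⁻¹ * (3.15 ^ 4 / 45)) := by gcongr
    _ < 29 / 20 := by norm_num

theorem lt_latticeEnergy_of_lt_one (hα : Even α) (hα12 : 12 ≤ α) (ht : 0 < t) (ht1 : t < 1) :
    29 / 20 < latticeEnergy α t := by
  rcases lt_or_ge t (1 / 2) with h_lt_half | h_half_le
  · linarith [two_sub_le_latticeEnergy hα (by lia) ht]
  · refine lt_of_lt_of_le ?_ (mul_one_add_le_latticeEnergy hα (by lia) ht)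
    rcases le_total t (3 / 4) with h_le | h_ge
    · have h_pow : t ^ α ≤ (3 / 4) ^ 12 :=
        (pow_le_pow_of_le_one ht.le ht1.le hα12).trans (by gcongr)
      calc (29 / 20 : ℝ) < 1 / 2 * (1 + 2 * (1 / (1 + (3 / 4) ^ 12))) := by norm_num
        _ ≤ t * (1 + 2 * (1 / (1 + t ^ α))) := by gcongr
    · have h_pow : t ^ α ≤ 1 := pow_le_one₀ ht.le ht1.le
      calc (29 / 20 : ℝ) < 3 / 4 * (1 + 2 * (1 / (1 + 1))) := by norm_num
        _ ≤ t * (1 + 2 * (1 / (1 + t ^ α))) := by gcongr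

theorem one_le_of_forall_latticeEnergy_le (hα : Even α) (hα12 : 12 ≤ α) {s : ℝ} (hs : 0 < s)
    (hmin : ∀ t : ℝ, 0 < t → latticeEnergy α s ≤ latticeEnergy α t) : 1 ≤ s := by
  by_contra! hs1
  exact ((latticeEnergy_five_quarters_lt hα hα12).trans
    (lt_latticeEnergy_of_lt_one hα hα12 hs hs1)).not_ge (hmin _ (by norm_num))

end Energy

section SecondMoment

variable {α : ℕ} {c : ℝ}

theorem one_add_mul_mul_pow_le {k : ℕ} (hk : Even k) (hα : Even α) (hkα : 2 * k ≤ α) (hc : 1 ≤ c)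
    {n : ℤ} (hn : n ≠ 0) : (1 + c) * (n : ℝ) ^ k ≤ 1 + c * (n : ℝ) ^ α := by
  obtain ⟨m, rfl⟩ := hα
  have h_abs : (1 : ℝ) ≤ |(n : ℝ)| := by exact_mod_cast Int.one_le_abs hn
  set X := |(n : ℝ)| ^ m
  have hX1 : 1 ≤ X := one_le_pow₀ h_abs
  have h_le : (n : ℝ) ^ k ≤ X := by
    rw [← hk.pow_abs]
    exact pow_le_pow_right₀ h_abs (by lia)
  have h_sq : (n : ℝ) ^ (m + m) = X ^ 2 := by
    rw [← (Even.add_self m).pow_abs, pow_add, sq]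
  have h_factor : 0 ≤ (X - 1) * (c * X - 1) :=
    mul_nonneg (by linarith) (by nlinarith)
  calc (1 + c) * (n : ℝ) ^ k ≤ (1 + c) * X := by gcongr
    _ ≤ (1 + c) * X + (X - 1) * (c * X - 1) := by linarith
    _ = 1 + c * (n : ℝ) ^ (m + m) := by rw [h_sq]; ring

theorem sq_mul_one_div_one_add_mul_pow_le (hα : Even α) (hα12 : 12 ≤ α) (hc : 1 ≤ c) (n : ℤ) :
    (n : ℝ) ^ 2 * (1 / (1 + c * (n : ℝ) ^ α)) ≤ 1 / (1 + c) * (1 / (n : ℝ) ^ 4) := by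
  rcases eq_or_ne n 0 with rfl | hn
  · simp
  · have hn0 : (n : ℝ) ≠ 0 := by exact_mod_cast hn
    calc (n : ℝ) ^ 2 * (1 / (1 + c * (n : ℝ) ^ α))
        ≤ (n : ℝ) ^ 2 * (1 / ((1 + c) * (n : ℝ) ^ 6)) := by
          gcongr
          exact one_add_mul_mul_pow_le (by decide) hα hα12 hc hn
      _ = 1 / (1 + c) * (1 / (n : ℝ) ^ 4) := by field_simp

theorem tsum_sq_mul_one_div_one_add_mul_pow_le (hα : Even α) (hα12 : 12 ≤ α) (hc : 1 ≤ c) :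
    ∑' n : ℤ, (n : ℝ) ^ 2 * (1 / (1 + c * (n : ℝ) ^ α)) ≤ 1 / (1 + c) * (π ^ 4 / 45) := by
  have h_dom := hasSum_int_one_div_pow_four.mul_left (1 / (1 + c))
  have h_summable := Summable.of_nonneg_of_le
    (fun n : ℤ => mul_nonneg (sq_nonneg (n : ℝ))
      (one_div_pos.2 (one_add_mul_pow_pos hα (zero_le_one.trans hc) n)).le)
    (sq_mul_one_div_one_add_mul_pow_le hα hα12 hc) h_dom.summable
  exact hasSum_le (sq_mul_one_div_one_add_mul_pow_le hα hα12 hc) h_summable.hasSum h_dom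

end SecondMoment

section DerivativeSeries

variable {α : ℕ} {c : ℝ}

theorem summable_mul_pow_div_one_add_mul_pow_sq (hα : Even α) (hα2 : 2 ≤ α) (hc : 0 < c) :
    Summable fun n : ℤ => c * (n : ℝ) ^ α / (1 + c * (n : ℝ) ^ α) ^ 2 := by
  have h_nonneg (n : ℤ) : 0 ≤ c * (n : ℝ) ^ α := mul_nonneg hc.le (hα.pow_nonneg _)
  refine .of_nonneg_of_le (fun n => div_nonneg (h_nonneg n) (sq_nonneg _)) (fun n => ?_)
    (summable_one_div_one_add_mul_pow hα hα2 hc)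
  have := h_nonneg n
  rw [div_le_div_iff₀ (by positivity) (by positivity)]
  nlinarith

theorem two_mul_div_le_tsum_mul_pow_div_one_add_mul_pow_sq (hα : Even α) (hα2 : 2 ≤ α)
    (hc : 0 < c) :
    2 * (c / (1 + c) ^ 2) ≤ ∑' n : ℤ, c * (n : ℝ) ^ α / (1 + c * (n : ℝ) ^ α) ^ 2 := by
  simpa [Finset.sum_range_succ, show α ≠ 0 by lia] using two_mul_sum_range_le_tsum_int_add
    (f := fun n : ℤ => c * (n : ℝ) ^ α / (1 + c * (n : ℝ) ^ α) ^ 2)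
    (fun n => by simp only [Int.cast_neg, hα.neg_pow])
    (fun n => div_nonneg (mul_nonneg hc.le (hα.pow_nonneg _)) (sq_nonneg _))
    (summable_mul_pow_div_one_add_mul_pow_sq hα hα2 hc) 2

theorem hasDerivAt_one_div_one_add_mul_pow {𝕜 : Type*} [NontriviallyNormedField 𝕜] (α : ℕ)
    (c : 𝕜) {x : 𝕜} (hx : 1 + c * x ^ α ≠ 0) :
    HasDerivAt (fun x => 1 / (1 + c * x ^ α))
      (-(c * (α * x ^ (α - 1))) / (1 + c * x ^ α) ^ 2) x := by
  simpa only [one_div] using (((hasDerivAt_pow α x).const_mul c).const_add 1).fun_inv hx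

theorem neg_two_thirds_add_four_mul_Rfun {n : ℤ} (hn : n ≠ 0) :
    -(2 / 3) + 4 * Rfun (π * n) = -(4 / (π ^ 2 * (n : ℝ) ^ 2)) := by
  have hn0 : (n : ℝ) ≠ 0 := by exact_mod_cast hn
  have h_sin : sin (π * n) = 0 := by rw [mul_comm, sin_int_mul_pi]
  rw [Rfun, if_neg (mul_ne_zero pi_ne_zero hn0), h_sin]
  field_simp
  ring

theorem cube_mul_deriv_mul_Rfun_eq (hα : Even α) (hα0 : α ≠ 0) (hc : 0 ≤ c) (n : ℤ) :
    (n : ℝ) ^ 3 * deriv (fun x => 1 / (1 + c * x ^ α)) n * (-(2 / 3) + 4 * Rfun (π * n)) =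
      4 * α / π ^ 2 * (c * (n : ℝ) ^ α / (1 + c * (n : ℝ) ^ α) ^ 2) := by
  rcases eq_or_ne n 0 with rfl | hn
  · simp [hα0]
  · have hn0 : (n : ℝ) ≠ 0 := by exact_mod_cast hn
    have h_ne : 1 + c * (n : ℝ) ^ α ≠ 0 := (one_add_mul_pow_pos hα hc n).ne'
    rw [(hasDerivAt_one_div_one_add_mul_pow α c h_ne).deriv, neg_two_thirds_add_four_mul_Rfun hn]
    rw [← pow_sub_one_mul hα0 (n : ℝ)] at h_ne ⊢
    field_simp

theorem pi_pow_six_le : π ^ 6 ≤ 1080 :=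
  calc π ^ 6 ≤ 3.15 ^ 6 := by gcongr; exact pi_lt_d2.le
    _ ≤ 1080 := by norm_num

theorem two_mul_one_div_mul_pi_pow_four_le (hα12 : 12 ≤ α) (hc : 1 ≤ c) :
    2 * (1 / (1 + c) * (π ^ 4 / 45)) ≤ 4 * α / π ^ 2 * (2 * (c / (1 + c) ^ 2)) := by
  have hα : (12 : ℝ) ≤ α := by exact_mod_cast hα12
  have h_half : 1 / (1 + c) ≤ 2 * (c / (1 + c) ^ 2) := by
    rw [mul_div_assoc', div_le_div_iff₀ (by positivity) (by positivity)]
    nlinarith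
  have h_pi : 2 * (π ^ 4 / 45) ≤ 4 * α / π ^ 2 := by
    rw [le_div_iff₀ (by positivity)]
    linarith [pi_pow_six_le]
  calc 2 * (1 / (1 + c) * (π ^ 4 / 45)) = 2 * (π ^ 4 / 45) * (1 / (1 + c)) := by ring
    _ ≤ 4 * α / π ^ 2 * (2 * (c / (1 + c) ^ 2)) := by gcongr

end DerivativeSeries

theorem statement18_general {α : ℕ} (hα : Even α) (hα12 : 12 ≤ α) {s : ℝ} (hs : 1 ≤ s)
    (F : ℝ → ℝ) (hF : ∀ x, F x = 1 / (1 + s ^ α * x ^ α)) :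
    0 ≤ (∑' n : ℤ, (n : ℝ) ^ 3 * deriv F n * (-(2 / 3) + 4 * Rfun (π * n)))
        - ∑' n : ℤ, 2 * (n : ℝ) ^ 2 * F n := by
  obtain rfl : F = fun x => 1 / (1 + s ^ α * x ^ α) := funext hF
  have hc : 1 ≤ s ^ α := one_le_pow₀ hs
  have hc0 : 0 < s ^ α := one_pos.trans_le hc
  simp only [cube_mul_deriv_mul_Rfun_eq hα (by lia) hc0.le, mul_assoc (2 : ℝ), tsum_mul_left]
  rw [sub_nonneg]
  calc 2 * ∑' n : ℤ, (n : ℝ) ^ 2 * (1 / (1 + s ^ α * (n : ℝ) ^ α))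
      ≤ 2 * (1 / (1 + s ^ α) * (π ^ 4 / 45)) := by
        gcongr
        exact tsum_sq_mul_one_div_one_add_mul_pow_le hα hα12 hc
    _ ≤ 4 * α / π ^ 2 * (2 * (s ^ α / (1 + s ^ α) ^ 2)) :=
        two_mul_one_div_mul_pi_pow_four_le hα12 hc
    _ ≤ 4 * α / π ^ 2 * ∑' n : ℤ, s ^ α * (n : ℝ) ^ α / (1 + s ^ α * (n : ℝ) ^ α) ^ 2 := by
        gcongr
        exact two_mul_div_le_tsum_mul_pow_div_one_add_mul_pow_sq hα (by lia) hc0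

/-- For `α ≥ 12`,
`Σ_{n∈ℤ} n³·F_α′(n)·(−2/3 + 4ℛ(πn)) − Σ_{n∈ℤ} 2n²·F_α(n) ≥ 0`. -/
theorem statement18 (α : ℕ) (hα : Even α) (hα12 : 12 ≤ α) (s : ℝ) (hs : 0 < s)
    (hmin : ∀ t : ℝ, 0 < t → latticeEnergy α s ≤ latticeEnergy α t)
    (F : ℝ → ℝ) (hF : ∀ x, F x = 1 / (1 + s ^ α * x ^ α)) :
    0 ≤ (∑' n : ℤ, (n : ℝ) ^ 3 * deriv F n * (-(2 / 3) + 4 * Rfun (Real.pi * n)))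
        - ∑' n : ℤ, 2 * (n : ℝ) ^ 2 * F n :=
  statement18_general hα hα12 (one_le_of_forall_latticeEnergy_le hα hα12 hs hmin) F hF
end
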